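/- Let n ≥ 3 and 0 < θ < π/2. Then 2·B(n,θ) ≤ A(n−1, arccos(cos θ / cos(θ/2))) + A(n,θ), where A(n−1,·) refers to codes on the unit sphere S^{n−2} ⊂ ℝ^{n−1}. -/

import Mathlib

noncomputable section

/-- The "North pole" `(0, …, 0, 1)` of the unit sphere in `ℝ^n`. -/
def north (n : ℕ) : EuclideanSpace ℝ (Fin n) :=
  if h : 0 < n then EuclideanSpace.single ⟨n - 1, Nat.sub_lt h Nat.one_pos⟩ 1 else 0

/-- Angular distance between two points: `arccos ⟨x, y⟩`. -/
def aDist {n : ℕ} (x y : EuclideanSpace ℝ (Fin n)) : ℝ := Real.arccos (inner ℝ x y : ℝ)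

/-- A finite set of unit vectors with pairwise angular distance at least `θ`. -/
def IsCode {n : ℕ} (θ : ℝ) (C : Finset (EuclideanSpace ℝ (Fin n))) : Prop :=
  (∀ x ∈ C, ‖x‖ = 1) ∧ ∀ x ∈ C, ∀ y ∈ C, x ≠ y → θ ≤ aDist x y

/-- `A(n, θ)`: maximal size of a `θ`-code on the unit sphere `S^{n-1} ⊂ ℝ^n`. -/
def sphereMax (n : ℕ) (θ : ℝ) : ℕ :=
  sSup {M | ∃ C : Finset (EuclideanSpace ℝ (Fin n)), IsCode θ C ∧ C.card = M}

/-- `A(n, θ, φ)`: maximal size of a `θ`-code in the cap of angular radius `φ` about the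
North pole. -/
def capMax (n : ℕ) (θ φ : ℝ) : ℕ :=
  sSup {M | ∃ C : Finset (EuclideanSpace ℝ (Fin n)), IsCode θ C ∧
    (∀ x ∈ C, aDist x (north n) ≤ φ) ∧ C.card = M}

/-- `A(n, θ, [ψ, φ])`: maximal size of a `θ`-code in the strip `Z(n, [ψ, φ])`. -/
def stripMax (n : ℕ) (θ ψ φ : ℝ) : ℕ :=
  sSup {M | ∃ C : Finset (EuclideanSpace ℝ (Fin n)), IsCode θ C ∧
    (∀ x ∈ C, ψ ≤ aDist x (north n) ∧ aDist x (north n) ≤ φ) ∧ C.card = M}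

/-- `m(n, d)`: maximal number of points in the closed unit ball of `ℝ^n` with pairwise
Euclidean distances at least `d`. -/
def ballMax (n : ℕ) (d : ℝ) : ℕ :=
  sSup {M | ∃ C : Finset (EuclideanSpace ℝ (Fin n)), (∀ x ∈ C, ‖x‖ ≤ 1) ∧
    (∀ x ∈ C, ∀ y ∈ C, x ≠ y → d ≤ dist x y) ∧ C.card = M}

/-- `ω(θ, α, β) = arccos((cos θ - cos α cos β) / (sin α sin β))`. -/
def omega2 (θ α β : ℝ) : ℝ :=
  Real.arccos ((Real.cos θ - Real.cos α * Real.cos β) / (Real.sin α * Real.sin β))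

/-- `ω(θ, α) := ω(θ, α, α)`. -/
def omega1 (θ α : ℝ) : ℝ := omega2 θ α α

end


/-!
Split a largest code `C` in the closed hemisphere about the pole into the set `T` of points at
angle at least `θ` from their own mirror image in the equator, and the rest `S`. Two different
points of the hemisphere only get farther apart when one of them is reflected, so `C` together with
the mirror images of `T` is again a `θ`-code, and `|C| + |T| ≤ A(n, θ)`.

The points of `S` have latitude less than `θ / 2`. If two of them have heights `a ≤ b` over the
equator and their projections to its hyperplane have lengths `p` and `q`, these projections have
inner product at most `cos θ - a * b ≤ cos θ * (1 - a ^ 2) = cos θ * p ^ 2`, hence cosine at most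
`cos θ * p / q ≤ cos θ / cos (θ / 2)`. So `|S| ≤ A(n - 1, arccos (cos θ / cos (θ / 2)))`; it remains
to add the two bounds, using `|C| = |T| + |S|`.
-/

section

open Finset Submodule
open scoped RealInnerProductSpace

theorem packingNumber_ne_top_of_totallyBounded {X : Type*} [PseudoEMetricSpace X] {A : Set X}
    (hA : TotallyBounded A) {ε : NNReal} (hε : ε ≠ 0) : Metric.packingNumber ε A ≠ ⊤ := by
  obtain ⟨N, -, hN, hcover⟩ :=
    Metric.exists_finite_isCover_of_totallyBounded (half_pos hε.bot_lt).ne' hA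
  have hle : Metric.packingNumber (2 * (ε / 2)) A ≤ N.encard :=
    (Metric.packingNumber_two_mul_le_externalCoveringNumber _ _).trans
      hcover.externalCoveringNumber_le_encard
  rw [mul_div_cancel₀ _ two_ne_zero] at hle
  exact (hle.trans_lt hN.encard_lt_top).ne

/-- A spherical code with maximal cosine `c`, in an arbitrary real inner product space, given as a
family of unit vectors indexed by a finite set `S`. Indexing the points makes it possible to build
new codes without first checking that their points are distinct: see
`IsSphericalCodeOn.injOn`. -/
structure IsSphericalCodeOn {ι E : Type*} [NormedAddCommGroup E] [InnerProductSpace ℝ E]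
    (c : ℝ) (S : Finset ι) (f : ι → E) : Prop where
  norm_eq_one : ∀ i ∈ S, ‖f i‖ = 1
  inner_le : (S : Set ι).Pairwise fun i j => ⟪f i, f j⟫ ≤ c

theorem isCode_iff_isSphericalCodeOn {n : ℕ} {θ : ℝ} (hθ₀ : 0 ≤ θ) (hθπ : θ ≤ Real.pi)
    {C : Finset (EuclideanSpace ℝ (Fin n))} :
    IsCode θ C ↔ IsSphericalCodeOn (Real.cos θ) C id := by
  have le_aDist_iff {x y : EuclideanSpace ℝ (Fin n)} (hx : ‖x‖ = 1) (hy : ‖y‖ = 1) :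
      θ ≤ aDist x y ↔ ⟪x, y⟫ ≤ Real.cos θ := by
    have habs : |⟪x, y⟫| ≤ 1 := by simpa [hx, hy] using abs_real_inner_le_norm x y
    have hcos : Real.cos (aDist x y) = ⟪x, y⟫ := Real.cos_arccos (abs_le.1 habs).1 (abs_le.1 habs).2
    rw [← hcos]
    exact (Real.strictAntiOn_cos.le_iff_ge ⟨Real.arccos_nonneg _, Real.arccos_le_pi _⟩
      ⟨hθ₀, hθπ⟩).symm
  constructor
  · rintro ⟨hnorm, hdist⟩
    exact ⟨hnorm, fun x hx y hy hxy =>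
      (le_aDist_iff (hnorm x hx) (hnorm y hy)).1 (hdist x hx y hy hxy)⟩
  · rintro ⟨hnorm, hinner⟩
    exact ⟨hnorm, fun x hx y hy hxy =>
      (le_aDist_iff (hnorm x hx) (hnorm y hy)).2 (hinner hx hy hxy)⟩

namespace IsSphericalCodeOn

variable {ι κ E F : Type*} [NormedAddCommGroup E] [InnerProductSpace ℝ E]
  [NormedAddCommGroup F] [InnerProductSpace ℝ F] {c : ℝ} {S T : Finset ι} {f : ι → E}

theorem inner_self (hf : IsSphericalCodeOn c S f) {i : ι} (hi : i ∈ S) : ⟪f i, f i⟫ = 1 := by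
  rw [real_inner_self_eq_norm_sq, hf.norm_eq_one i hi, one_pow]

theorem injOn (hf : IsSphericalCodeOn c S f) (hc : c < 1) : Set.InjOn f S := by
  intro i hi j hj hij
  by_contra hne
  have hle : ⟪f i, f j⟫ ≤ c := hf.inner_le hi hj hne
  rw [← hij, hf.inner_self hi] at hle
  exact hc.not_ge hle

theorem mono (hf : IsSphericalCodeOn c S f) (hTS : T ⊆ S) : IsSphericalCodeOn c T f :=
  ⟨fun i hi => hf.norm_eq_one i (hTS hi), hf.inner_le.mono (coe_subset.2 hTS)⟩

theorem map_linearIsometry (hf : IsSphericalCodeOn c S f) (L : E →ₗᵢ[ℝ] F) :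
    IsSphericalCodeOn c S (L ∘ f) where
  norm_eq_one _ hi := (L.norm_map _).trans (hf.norm_eq_one _ hi)
  inner_le _ hi _ hj hij := (L.inner_map_map _ _).trans_le (hf.inner_le hi hj hij)

theorem image [DecidableEq E] (hf : IsSphericalCodeOn c S f) :
    IsSphericalCodeOn c (S.image f) id where
  norm_eq_one := forall_mem_image.2 hf.norm_eq_one
  inner_le := by
    rw [coe_image]
    rintro _ ⟨i, hi, rfl⟩ _ ⟨j, hj, rfl⟩ hij
    exact hf.inner_le hi hj (ne_of_apply_ne f hij)

theorem sqrt_le_dist (hf : IsSphericalCodeOn c S f) {i j : ι} (hi : i ∈ S) (hj : j ∈ S)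
    (hij : i ≠ j) : √(2 - 2 * c) ≤ dist (f i) (f j) := by
  refine Real.sqrt_le_iff.2 ⟨dist_nonneg, ?_⟩
  rw [dist_eq_norm, norm_sub_sq_real, hf.norm_eq_one i hi, hf.norm_eq_one j hj]
  linarith [hf.inner_le hi hj hij]

theorem exists_card_le [FiniteDimensional ℝ E] (hc : c < 1) :
    ∃ N : ℕ, ∀ C : Finset E, IsSphericalCodeOn c C id → #C ≤ N := by
  have hδ : 0 < √(2 - 2 * c) := Real.sqrt_pos.2 (by linarith)
  set ε : NNReal := Real.toNNReal (√(2 - 2 * c) / 2)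
  have hε : ε ≠ 0 := (Real.toNNReal_pos.2 (half_pos hδ)).ne'
  obtain ⟨N, hN⟩ := ENat.ne_top_iff_exists.1 <| packingNumber_ne_top_of_totallyBounded
    (isCompact_sphere (0 : E) 1).totallyBounded hε
  refine ⟨N, fun C hC => ?_⟩
  have hsep : Metric.IsSeparated ε (C : Set E) := by
    intro x hx y hy hxy
    rw [edist_dist]
    exact (ENNReal.ofReal_lt_ofReal_iff_of_nonneg (half_pos hδ).le).2
      ((half_lt_self hδ).trans_le (hC.sqrt_le_dist hx hy hxy))
  have hsub : (C : Set E) ⊆ Metric.sphere 0 1 := fun x hx =>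
    mem_sphere_zero_iff_norm.2 (hC.norm_eq_one x hx)
  have hcard := hsep.encard_le_packingNumber hsub
  rw [← hN, Set.encard_coe_eq_coe_finsetCard] at hcard
  exact_mod_cast hcard

end IsSphericalCodeOn

theorem cos_lt_one_of_pos_of_le_pi {θ : ℝ} (hθ₀ : 0 < θ) (hθπ : θ ≤ Real.pi) :
    Real.cos θ < 1 := by
  simpa only [Real.cos_zero] using Real.cos_lt_cos_of_nonneg_of_le_pi le_rfl hθπ hθ₀

theorem exists_card_le_of_isCode (n : ℕ) {θ : ℝ} (hθ₀ : 0 < θ) (hθπ : θ ≤ Real.pi) :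
    ∃ N : ℕ, ∀ C : Finset (EuclideanSpace ℝ (Fin n)), IsCode θ C → #C ≤ N := by
  simpa only [isCode_iff_isSphericalCodeOn hθ₀.le hθπ] using
    IsSphericalCodeOn.exists_card_le (E := EuclideanSpace ℝ (Fin n))
      (cos_lt_one_of_pos_of_le_pi hθ₀ hθπ)

theorem IsCode.card_le_sphereMax {n : ℕ} {θ : ℝ} (hθ₀ : 0 < θ) (hθπ : θ ≤ Real.pi)
    {C : Finset (EuclideanSpace ℝ (Fin n))} (hC : IsCode θ C) : #C ≤ sphereMax n θ := by
  obtain ⟨N, hN⟩ := exists_card_le_of_isCode n hθ₀ hθπ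
  refine le_csSup ⟨N, ?_⟩ ⟨C, hC, rfl⟩
  rintro _ ⟨D, hD, rfl⟩
  exact hN D hD

theorem IsSphericalCodeOn.card_le_sphereMax {ι E : Type*} [NormedAddCommGroup E]
    [InnerProductSpace ℝ E] [FiniteDimensional ℝ E] {θ : ℝ} (hθ₀ : 0 < θ) (hθπ : θ ≤ Real.pi)
    {S : Finset ι} {f : ι → E} (hf : IsSphericalCodeOn (Real.cos θ) S f) :
    #S ≤ sphereMax (Module.finrank ℝ E) θ := by
  classical
  have hcode := hf.map_linearIsometry (stdOrthonormalBasis ℝ E).repr.toLinearIsometry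
  rw [← card_image_of_injOn (hcode.injOn (cos_lt_one_of_pos_of_le_pi hθ₀ hθπ))]
  exact ((isCode_iff_isSphericalCodeOn hθ₀.le hθπ).2 hcode.image).card_le_sphereMax hθ₀ hθπ

theorem exists_isCode_card_eq_capMax (n : ℕ) {θ : ℝ} (hθ₀ : 0 < θ) (hθπ : θ ≤ Real.pi) (φ : ℝ) :
    ∃ C : Finset (EuclideanSpace ℝ (Fin n)), IsCode θ C ∧
      (∀ x ∈ C, aDist x (north n) ≤ φ) ∧ #C = capMax n θ φ := by
  obtain ⟨N, hN⟩ := exists_card_le_of_isCode n hθ₀ hθπ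
  refine Nat.sSup_mem (s := {M | ∃ C : Finset (EuclideanSpace ℝ (Fin n)), IsCode θ C ∧
    (∀ x ∈ C, aDist x (north n) ≤ φ) ∧ #C = M}) ⟨0, ∅, by simp [IsCode]⟩ ⟨N, ?_⟩
  rintro _ ⟨D, hD, -, rfl⟩
  exact hN D hD

theorem norm_north {n : ℕ} (hn : 0 < n) : ‖north n‖ = 1 := by
  simp [north, hn]

section Hemisphere

variable {ι E : Type*} [NormedAddCommGroup E] [InnerProductSpace ℝ E] {v : E}

theorem inner_reflection_orthogonal_singleton (hv : ‖v‖ = 1) (x y : E) :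
    ⟪x, (ℝ ∙ v)ᗮ.reflection y⟫ = ⟪x, y⟫ - 2 * (⟪v, x⟫ * ⟪v, y⟫) := by
  rw [reflection_orthogonal_apply, Submodule.reflection_apply, starProjection_unit_singleton ℝ hv,
    neg_sub, inner_sub_right, two_nsmul, inner_add_right, real_inner_smul_right,
    real_inner_comm v x]
  ring

theorem inner_orthogonalProjectionOnto_orthogonal_singleton (hv : ‖v‖ = 1) (x y : E) :
    ⟪(ℝ ∙ v)ᗮ.orthogonalProjectionOnto x, (ℝ ∙ v)ᗮ.orthogonalProjectionOnto y⟫ =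
      ⟪x, y⟫ - ⟪v, x⟫ * ⟪v, y⟫ := by
  rw [inner_orthogonalProjectionOnto_eq_of_mem_left, ← starProjection_apply,
    starProjection_orthogonal_val, starProjection_unit_singleton ℝ hv, inner_sub_left,
    real_inner_smul_left]

theorem norm_sq_orthogonalProjectionOnto_orthogonal_singleton (hv : ‖v‖ = 1) (x : E) :
    ‖(ℝ ∙ v)ᗮ.orthogonalProjectionOnto x‖ ^ 2 = ‖x‖ ^ 2 - ⟪v, x⟫ ^ 2 := by
  rw [← real_inner_self_eq_norm_sq, ← real_inner_self_eq_norm_sq, sq,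
    inner_orthogonalProjectionOnto_orthogonal_singleton hv]

theorem inner_reflection_orthogonal_singleton_self (hv : ‖v‖ = 1) (x : E) :
    ⟪x, (ℝ ∙ v)ᗮ.reflection x⟫ =
      2 * ‖(ℝ ∙ v)ᗮ.orthogonalProjectionOnto x‖ ^ 2 - ‖x‖ ^ 2 := by
  rw [inner_reflection_orthogonal_singleton hv,
    norm_sq_orthogonalProjectionOnto_orthogonal_singleton hv, real_inner_self_eq_norm_sq]
  ring

theorem cos_half_le_norm_orthogonalProjectionOnto {θ : ℝ} {x : E} (hv : ‖v‖ = 1) (hx : ‖x‖ = 1)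
    (h : Real.cos θ ≤ ⟪x, (ℝ ∙ v)ᗮ.reflection x⟫) :
    Real.cos (θ / 2) ≤ ‖(ℝ ∙ v)ᗮ.orthogonalProjectionOnto x‖ := by
  have hdouble : Real.cos θ = 2 * Real.cos (θ / 2) ^ 2 - 1 := by
    rw [← Real.cos_two_mul, mul_div_cancel₀ _ two_ne_zero]
  rw [inner_reflection_orthogonal_singleton_self hv, hx, hdouble] at h
  exact le_of_abs_le (abs_le_of_sq_le_sq (by linarith) (norm_nonneg _))

theorem inner_normalize_normalize (x y : E) :
    ⟪NormedSpace.normalize x, NormedSpace.normalize y⟫ = ⟪x, y⟫ / (‖x‖ * ‖y‖) := by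
  rw [NormedSpace.normalize, NormedSpace.normalize, real_inner_smul_left, real_inner_smul_right]
  field_simp

theorem sub_mul_le_div_mul {a b c k p q : ℝ} (ha : 0 ≤ a) (hb : 0 ≤ b) (hc₀ : 0 ≤ c)
    (hc₁ : c ≤ 1) (hk : 0 < k) (hkp : k ≤ p) (hkq : k ≤ q) (hp : p ^ 2 = 1 - a ^ 2)
    (hq : q ^ 2 = 1 - b ^ 2) : c - a * b ≤ c / k * (p * q) := by
  wlog hab : a ≤ b generalizing a b p q
  · rw [mul_comm a, mul_comm p]
    exact this hb ha hkq hkp hq hp (le_of_not_ge hab)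
  have hp₀ : 0 ≤ p := hk.le.trans hkp
  have hp₁ : p ≤ 1 := by nlinarith
  have hcab : c * a ^ 2 ≤ a * b := calc
    c * a ^ 2 ≤ a ^ 2 := mul_le_of_le_one_left (sq_nonneg a) hc₁
    _ ≤ a * b := by rw [sq]; gcongr
  calc
    c - a * b ≤ c - c * a ^ 2 := sub_le_sub_left hcab c
    _ = c * p ^ 2 := by rw [hp]; ring
    _ ≤ c * p := by gcongr; exact pow_le_of_le_one hp₀ hp₁ two_ne_zero
    _ ≤ c * p * (q / k) := le_mul_of_one_le_right (by positivity) ((one_le_div hk).2 hkq)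
    _ = c / k * (p * q) := by ring

namespace IsSphericalCodeOn

variable {c : ℝ} {S T : Finset ι} {f : ι → E}

theorem disjSum_reflection (hv : ‖v‖ = 1) (hf : IsSphericalCodeOn c S f)
    (hpos : ∀ i ∈ S, 0 ≤ ⟪v, f i⟫) (hTS : T ⊆ S)
    (hT : ∀ i ∈ T, ⟪f i, (ℝ ∙ v)ᗮ.reflection (f i)⟫ ≤ c) :
    IsSphericalCodeOn c (S.disjSum T) (Sum.elim f fun i => (ℝ ∙ v)ᗮ.reflection (f i)) := by
  have hmirror : ∀ i ∈ S, ∀ j ∈ T, ⟪f i, (ℝ ∙ v)ᗮ.reflection (f j)⟫ ≤ c := by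
    intro i hi j hj
    obtain rfl | hij := eq_or_ne i j
    · exact hT i hj
    · rw [inner_reflection_orthogonal_singleton hv]
      linarith [hf.inner_le hi (hTS hj) hij, mul_nonneg (hpos i hi) (hpos j (hTS hj))]
  constructor
  · rintro (i | i) hi
    · exact hf.norm_eq_one i (inl_mem_disjSum.1 hi)
    · simpa using hf.norm_eq_one i (hTS (inr_mem_disjSum.1 hi))
  · rintro (i | i) hi (j | j) hj hij
    · exact hf.inner_le (inl_mem_disjSum.1 hi) (inl_mem_disjSum.1 hj) (ne_of_apply_ne _ hij)
    · exact hmirror i (inl_mem_disjSum.1 hi) j (inr_mem_disjSum.1 hj)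
    · rw [real_inner_comm]
      exact hmirror j (inl_mem_disjSum.1 hj) i (inr_mem_disjSum.1 hi)
    · exact (LinearIsometryEquiv.inner_map_map _ _ _).trans_le <|
        hf.inner_le (hTS (inr_mem_disjSum.1 hi)) (hTS (inr_mem_disjSum.1 hj)) (ne_of_apply_ne _ hij)

theorem normalize_orthogonalProjectionOnto {k : ℝ} (hv : ‖v‖ = 1) (hf : IsSphericalCodeOn c S f)
    (hc₀ : 0 ≤ c) (hc₁ : c ≤ 1) (hpos : ∀ i ∈ S, 0 ≤ ⟪v, f i⟫) (hk : 0 < k)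
    (hproj : ∀ i ∈ S, k ≤ ‖(ℝ ∙ v)ᗮ.orthogonalProjectionOnto (f i)‖) :
    IsSphericalCodeOn (c / k) S
      fun i => NormedSpace.normalize ((ℝ ∙ v)ᗮ.orthogonalProjectionOnto (f i)) := by
  have hprojpos : ∀ i ∈ S, 0 < ‖(ℝ ∙ v)ᗮ.orthogonalProjectionOnto (f i)‖ :=
    fun i hi => hk.trans_le (hproj i hi)
  have hnorm_sq : ∀ i ∈ S,
      ‖(ℝ ∙ v)ᗮ.orthogonalProjectionOnto (f i)‖ ^ 2 = 1 - ⟪v, f i⟫ ^ 2 := by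
    intro i hi
    rw [norm_sq_orthogonalProjectionOnto_orthogonal_singleton hv, hf.norm_eq_one i hi, one_pow]
  constructor
  · exact fun i hi => NormedSpace.norm_normalize_eq_one_iff.2 (norm_pos_iff.1 (hprojpos i hi))
  · intro i hi j hj hij
    rw [inner_normalize_normalize, inner_orthogonalProjectionOnto_orthogonal_singleton hv,
      div_le_iff₀ (mul_pos (hprojpos i hi) (hprojpos j hj))]
    exact (sub_le_sub_right (hf.inner_le hi hj hij) _).trans <|
      sub_mul_le_div_mul (hpos i hi) (hpos j hj) hc₀ hc₁ hk (hproj i hi) (hproj j hj)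
        (hnorm_sq i hi) (hnorm_sq j hj)

theorem card_le_sphereMax_equator [FiniteDimensional ℝ E] {θ : ℝ} (hθ₀ : 0 < θ)
    (hθ : θ ≤ Real.pi / 2) (hv : ‖v‖ = 1) (hf : IsSphericalCodeOn (Real.cos θ) S f)
    (hpos : ∀ i ∈ S, 0 ≤ ⟪v, f i⟫)
    (hmirror : ∀ i ∈ S, Real.cos θ ≤ ⟪f i, (ℝ ∙ v)ᗮ.reflection (f i)⟫) :
    #S ≤ sphereMax (Module.finrank ℝ (ℝ ∙ v)ᗮ)
      (Real.arccos (Real.cos θ / Real.cos (θ / 2))) := by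
  have hcos₀ : 0 ≤ Real.cos θ := Real.cos_nonneg_of_neg_pi_div_two_le_of_le (by linarith) hθ
  have hhalf₀ : 0 < Real.cos (θ / 2) := Real.cos_pos_of_mem_Ioo ⟨by linarith, by linarith⟩
  have hratio₀ : 0 ≤ Real.cos θ / Real.cos (θ / 2) := div_nonneg hcos₀ hhalf₀.le
  have hratio₁ : Real.cos θ / Real.cos (θ / 2) < 1 := (div_lt_one hhalf₀).2 <|
    Real.cos_lt_cos_of_nonneg_of_le_pi (by linarith) (by linarith) (by linarith)
  have hcode := hf.normalize_orthogonalProjectionOnto hv hcos₀ (Real.cos_le_one θ) hpos hhalf₀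
    fun i hi => cos_half_le_norm_orthogonalProjectionOnto hv (hf.norm_eq_one i hi) (hmirror i hi)
  rw [← Real.cos_arccos (by linarith) hratio₁.le] at hcode
  exact hcode.card_le_sphereMax (Real.arccos_pos.2 hratio₁) (Real.arccos_le_pi _)

theorem two_mul_card_le [FiniteDimensional ℝ E] {θ : ℝ} (hθ₀ : 0 < θ) (hθ : θ ≤ Real.pi / 2)
    (hv : ‖v‖ = 1) (hf : IsSphericalCodeOn (Real.cos θ) S f) (hpos : ∀ i ∈ S, 0 ≤ ⟪v, f i⟫) :
    2 * #S ≤ sphereMax (Module.finrank ℝ (ℝ ∙ v)ᗮ)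
        (Real.arccos (Real.cos θ / Real.cos (θ / 2))) + sphereMax (Module.finrank ℝ E) θ := by
  classical
  let FarFromMirror (i : ι) : Prop := ⟪f i, (ℝ ∙ v)ᗮ.reflection (f i)⟫ ≤ Real.cos θ
  have hmirrored : #S + #{i ∈ S | FarFromMirror i} ≤ sphereMax (Module.finrank ℝ E) θ := by
    rw [← card_disjSum]
    exact (hf.disjSum_reflection hv hpos (filter_subset _ _)
      fun i hi => (mem_filter.1 hi).2).card_le_sphereMax hθ₀ (by linarith)
  have hequator : #{i ∈ S | ¬ FarFromMirror i} ≤ sphereMax (Module.finrank ℝ (ℝ ∙ v)ᗮ)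
      (Real.arccos (Real.cos θ / Real.cos (θ / 2))) :=
    (hf.mono (filter_subset _ _)).card_le_sphereMax_equator hθ₀ hθ hv
      (fun i hi => hpos i (mem_filter.1 hi).1) fun i hi => (not_le.1 (mem_filter.1 hi).2).le
  have hsplit : #{i ∈ S | FarFromMirror i} + #{i ∈ S | ¬ FarFromMirror i} = #S :=
    card_filter_add_card_filter_not _
  omega

end IsSphericalCodeOn

end Hemisphere

theorem stmt16_general (n : ℕ) (hn : 0 < n) (θ : ℝ) (hθ : 0 < θ) (hθ2 : θ ≤ Real.pi / 2) :
    2 * capMax n θ (Real.pi / 2) ≤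
      sphereMax (n - 1) (Real.arccos (Real.cos θ / Real.cos (θ / 2))) + sphereMax n θ := by
  have hθπ : θ ≤ Real.pi := hθ2.trans (half_le_self Real.pi_pos.le)
  have hpole : ‖north n‖ = 1 := norm_north hn
  obtain ⟨C, hC, hcap, hcard⟩ := exists_isCode_card_eq_capMax n hθ hθπ (Real.pi / 2)
  have hpos : ∀ x ∈ C, 0 ≤ ⟪north n, x⟫ := fun x hx => by
    rw [real_inner_comm]
    exact Real.arccos_le_pi_div_two.1 (hcap x hx)
  have hsphere : Module.finrank ℝ (EuclideanSpace ℝ (Fin n)) = n := finrank_euclideanSpace_fin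
  have hequator : Module.finrank ℝ (ℝ ∙ north n)ᗮ = n - 1 :=
    haveI : Fact (Module.finrank ℝ (EuclideanSpace ℝ (Fin n)) = n - 1 + 1) := ⟨by omega⟩
    finrank_orthogonal_span_singleton (norm_ne_zero_iff.1 (by simp [hpole]))
  simpa only [hcard, hequator, hsphere] using
    ((isCode_iff_isSphericalCodeOn hθ.le hθπ).1 hC).two_mul_card_le hθ hθ2 hpole hpos

end

theorem stmt16 (n : ℕ) (hn : 3 ≤ n) (θ : ℝ) (hθ : 0 < θ) (hθ2 : θ < Real.pi / 2) :
    2 * capMax n θ (Real.pi / 2) ≤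
      sphereMax (n - 1) (Real.arccos (Real.cos θ / Real.cos (θ / 2))) + sphereMax n θ :=
  stmt16_general n (by omega) θ hθ hθ2.le
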